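/- Let n ≥ 2 and α > 1, and let z₀ = (1/3, 0, …, 0) ∈ Ω_α. There exists a constant C(α) such that for all integers j, m ≥ 1, with ℓ = ⌊log₂ m⌋ + 1, every point z ∈ S_{j,m} satisfies k(z, z₀; Ω_α) ≤ C(α)·(1 + ℓ)·2^{(α−1)j}. -/

import Mathlib

open MeasureTheory Metric Set
open scoped ENNReal

/-- The quasihyperbolic distance `k(z, z₀; Ω)`: the infimum, over all Lipschitz curves
`γ : [0,1] → Ω` joining `z` to `z₀`, of `∫ ‖γ'(t)‖ / d(γ(t), ∂Ω) dt`. -/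
noncomputable def qhDist {n : ℕ} (Ω : Set (EuclideanSpace ℝ (Fin n)))
    (z z₀ : EuclideanSpace ℝ (Fin n)) : ℝ :=
  sInf {L : ℝ | ∃ γ : ℝ → EuclideanSpace ℝ (Fin n),
    (∃ K : NNReal, LipschitzWith K γ) ∧ γ 0 = z ∧ γ 1 = z₀ ∧
    (∀ t ∈ Set.Icc (0:ℝ) 1, γ t ∈ Ω) ∧
    L = ∫ t in (0:ℝ)..1, ‖deriv γ t‖ / Metric.infDist (γ t) (frontier Ω)}

/-- The distance of `z` from the first coordinate axis. -/
noncomputable def radial {n : ℕ} [NeZero n] (z : EuclideanSpace ℝ (Fin n)) : ℝ :=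
  Real.sqrt (∑ i ∈ Finset.univ.erase (0 : Fin n), z i ^ 2)

/-- The cusp domain `Ω_α = {0 < x < 1, |y| < x^α} ⊆ ℝⁿ`. -/
noncomputable def cuspDomain (n : ℕ) [NeZero n] (α : ℝ) : Set (EuclideanSpace ℝ (Fin n)) :=
  {z | 0 < z 0 ∧ z 0 < 1 ∧ radial z < (z 0) ^ α}

/-- The set `S_{j,m}` of the generalized Whitney subdivision of the cusp, where
`ℓ = ⌊log₂ m⌋ + 1`. -/
noncomputable def cuspCell (n : ℕ) [NeZero n] (α : ℝ) (j m : ℕ) :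
    Set (EuclideanSpace ℝ (Fin n)) :=
  let ℓ := Nat.log 2 m + 1
  {z | (m:ℝ)/2^(j+ℓ) ≤ z 0 ∧ z 0 ≤ (m+1:ℝ)/2^(j+ℓ) ∧
    (1 - 1/2^(ℓ-1)) * (z 0) ^ α ≤ radial z ∧ radial z ≤ (1 - 1/2^ℓ) * (z 0) ^ α}

/-!
Travel from `z` straight to the axis, and then along the axis to `z₀`. Near the cusp,
`d(w, ∂Ω_α)` is comparable to the gap `w₀^α - radial w`: moving by `ρ` changes the gap by at most
`(1 + α)ρ`. On the first leg the gap grows at unit speed from at least `z₀^α / 2^ℓ` to `z₀^α`, which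
costs a logarithm of order `ℓ`; on the second leg the gap at height `s` is `s^α`, whose reciprocal
integrates to order `z₀^(1-α)`, that is `2^((α-1)j)`.
-/

open AffineMap (lineMap)

section QuasihyperbolicLength

variable {n : ℕ} {Ω : Set (EuclideanSpace ℝ (Fin n))} {γ γ₁ γ₂ : ℝ → EuclideanSpace ℝ (Fin n)}
  {z p w : EuclideanSpace ℝ (Fin n)} {K : NNReal} {a b t : ℝ}

/-- The quasihyperbolic speed `‖γ'(t)‖ / d(γ(t), ∂Ω)` of a curve. -/
noncomputable def qhSpeed (Ω : Set (EuclideanSpace ℝ (Fin n)))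
    (γ : ℝ → EuclideanSpace ℝ (Fin n)) (t : ℝ) : ℝ :=
  ‖deriv γ t‖ / infDist (γ t) (frontier Ω)

/-- The quasihyperbolic length in `Ω` of the curve `γ` over the parameter interval `[a, b]`. -/
noncomputable def qhLength (Ω : Set (EuclideanSpace ℝ (Fin n)))
    (γ : ℝ → EuclideanSpace ℝ (Fin n)) (a b : ℝ) : ℝ :=
  ∫ t in a..b, qhSpeed Ω γ t

/-- The curves from `z` to `w` over which the infimum `qhDist Ω z w` is taken. They are Lipschitz on
the whole line, but stay in `Ω` only over `[0, 1]`. -/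
structure IsQHPath (Ω : Set (EuclideanSpace ℝ (Fin n))) (γ : ℝ → EuclideanSpace ℝ (Fin n))
    (z w : EuclideanSpace ℝ (Fin n)) : Prop where
  exists_lipschitzWith : ∃ K : NNReal, LipschitzWith K γ
  source : γ 0 = z
  target : γ 1 = w
  mapsTo : MapsTo γ (Icc 0 1) Ω

/-- The concatenation of `γ₁` and `γ₂`, each run at double speed. It is written as a sum, rather
than by cases, so that it is visibly Lipschitz when `γ₁` and `γ₂` are. -/
noncomputable def qhConcat (γ₁ γ₂ : ℝ → EuclideanSpace ℝ (Fin n)) (t : ℝ) :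
    EuclideanSpace ℝ (Fin n) :=
  γ₁ (min (2 * t) 1) + (γ₂ (max (2 * t - 1) 0) - γ₂ 0)

lemma qhSpeed_nonneg : 0 ≤ qhSpeed Ω γ t :=
  div_nonneg (norm_nonneg _) infDist_nonneg

lemma qhSpeed_comp_mul_sub {c : ℝ} (hc : 0 ≤ c) (d : ℝ) :
    qhSpeed Ω (fun s => γ (c * s - d)) t = c * qhSpeed Ω γ (c * t - d) := by
  have hderiv : deriv (fun s => γ (c * s - d)) t = c • deriv γ (c * t - d) := by
    rw [deriv_comp_mul_left c (fun s => γ (s - d)), deriv_comp_sub_const]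
  rw [qhSpeed, qhSpeed, hderiv, norm_smul, Real.norm_of_nonneg hc, mul_div_assoc]

lemma qhLength_comp_mul_sub {c : ℝ} (hc : 0 ≤ c) (d : ℝ) :
    qhLength Ω (fun s => γ (c * s - d)) a b = qhLength Ω γ (c * a - d) (c * b - d) := by
  simp only [qhLength, qhSpeed_comp_mul_sub hc]
  rw [intervalIntegral.integral_const_mul, ← smul_eq_mul,
    intervalIntegral.smul_integral_comp_mul_sub (qhSpeed Ω γ)]

lemma qhLength_congr (hab : a ≤ b) (h : EqOn γ₁ γ₂ (Ioo a b)) :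
    qhLength Ω γ₁ a b = qhLength Ω γ₂ a b :=
  intervalIntegral.integral_congr_Ioo_of_le hab fun t ht => by
    simp only [qhSpeed, (h.eventuallyEq_of_mem (isOpen_Ioo.mem_nhds ht)).deriv_eq, h ht]

lemma intervalIntegrable_qhSpeed (hΩ : IsOpen Ω) (hγ : LipschitzWith K γ)
    (hmaps : MapsTo γ (uIcc a b) Ω) : IntervalIntegrable (qhSpeed Ω γ) volume a b := by
  have hderiv : IntervalIntegrable (fun t => ‖deriv γ t‖) volume a b :=
    (intervalIntegrable_const (c := (K : ℝ))).mono_fun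
      (measurable_deriv γ).norm.aestronglyMeasurable (.of_forall fun t => by
        simpa only [norm_norm, NNReal.norm_eq] using norm_deriv_le_of_lipschitz hγ)
  rcases (frontier Ω).eq_empty_or_nonempty with hempty | hne
  · have hzero : qhSpeed Ω γ = 0 := funext fun t => by simp [qhSpeed, hempty]
    exact hzero ▸ intervalIntegrable_const
  have hpos : ∀ t ∈ uIcc a b, infDist (γ t) (frontier Ω) ≠ 0 := fun t ht =>
    ((isClosed_frontier.notMem_iff_infDist_pos hne).1
      fun hmem => (hΩ.frontier_eq ▸ hmem).2 (hmaps ht)).ne'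
  exact hderiv.mul_continuousOn
    (((continuous_infDist_pt _).comp hγ.continuous).continuousOn.inv₀ hpos)

lemma qhDist_le_qhLength (h : IsQHPath Ω γ z w) : qhDist Ω z w ≤ qhLength Ω γ 0 1 := by
  refine csInf_le ⟨0, ?_⟩ ⟨γ, h.exists_lipschitzWith, h.source, h.target, h.mapsTo, rfl⟩
  rintro _ ⟨γ', -, -, -, -, rfl⟩
  exact intervalIntegral.integral_nonneg zero_le_one fun _ _ => qhSpeed_nonneg

lemma qhConcat_of_le (h : t ≤ 1 / 2) : qhConcat γ₁ γ₂ t = γ₁ (2 * t) := by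
  rw [qhConcat, min_eq_left (by linarith), max_eq_right (by linarith), sub_self, add_zero]

lemma qhConcat_of_ge (hp : γ₁ 1 = γ₂ 0) (h : 1 / 2 ≤ t) :
    qhConcat γ₁ γ₂ t = γ₂ (2 * t - 1) := by
  rw [qhConcat, min_eq_right (by linarith), max_eq_left (by linarith), hp, add_sub_cancel]

lemma IsQHPath.concat (h₁ : IsQHPath Ω γ₁ z p) (h₂ : IsQHPath Ω γ₂ p w) :
    IsQHPath Ω (qhConcat γ₁ γ₂) z w where
  exists_lipschitzWith := by
    obtain ⟨K₁, hK₁⟩ := h₁.exists_lipschitzWith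
    obtain ⟨K₂, hK₂⟩ := h₂.exists_lipschitzWith
    have hdouble : LipschitzWith ‖(2 : ℝ)‖₊ fun t : ℝ => 2 * t := lipschitzWith_smul (2 : ℝ)
    exact ⟨_, (hK₁.comp (hdouble.min_const 1)).add
      ((hK₂.comp ((hdouble.sub (.const 1)).max_const 0)).sub (.const _))⟩
  source := by rw [qhConcat_of_le (by norm_num), mul_zero, h₁.source]
  target := by
    rw [qhConcat_of_ge (h₁.target.trans h₂.source.symm) (by norm_num), ← h₂.target]
    norm_num
  mapsTo t ht := by
    rcases le_total t (1 / 2) with h | h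
    · rw [qhConcat_of_le h]
      exact h₁.mapsTo ⟨by linarith [ht.1], by linarith⟩
    · rw [qhConcat_of_ge (h₁.target.trans h₂.source.symm) h]
      exact h₂.mapsTo ⟨by linarith, by linarith [ht.2]⟩

lemma qhLength_concat (hΩ : IsOpen Ω) (h₁ : IsQHPath Ω γ₁ z p) (h₂ : IsQHPath Ω γ₂ p w) :
    qhLength Ω (qhConcat γ₁ γ₂) 0 1 = qhLength Ω γ₁ 0 1 + qhLength Ω γ₂ 0 1 := by
  have hγ := h₁.concat h₂
  obtain ⟨K, hK⟩ := hγ.exists_lipschitzWith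
  have hint : ∀ {a b : ℝ}, a ∈ Icc (0 : ℝ) 1 → b ∈ Icc (0 : ℝ) 1 →
      IntervalIntegrable (qhSpeed Ω (qhConcat γ₁ γ₂)) volume a b := fun ha hb =>
    intervalIntegrable_qhSpeed hΩ hK (hγ.mapsTo.mono_left (ordConnected_Icc.uIcc_subset ha hb))
  have hfirst : qhLength Ω (qhConcat γ₁ γ₂) 0 (1 / 2) = qhLength Ω γ₁ 0 1 := by
    rw [qhLength_congr (γ₂ := fun t => γ₁ (2 * t - 0)) (by norm_num)
      fun t ht => by simpa only [sub_zero] using qhConcat_of_le ht.2.le,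
      qhLength_comp_mul_sub zero_le_two]
    norm_num
  have hsecond : qhLength Ω (qhConcat γ₁ γ₂) (1 / 2) 1 = qhLength Ω γ₂ 0 1 := by
    rw [qhLength_congr (γ₂ := fun t => γ₂ (2 * t - 1)) (by norm_num)
      fun t ht => qhConcat_of_ge (h₁.target.trans h₂.source.symm) ht.1.le,
      qhLength_comp_mul_sub zero_le_two]
    norm_num
  rw [← hfirst, ← hsecond]
  exact (intervalIntegral.integral_add_adjacent_intervals
    (hint (by norm_num) (by norm_num)) (hint (by norm_num) (by norm_num))).symm

lemma isQHPath_lineMap (h : MapsTo (lineMap z w) (Icc (0 : ℝ) 1) Ω) :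
    IsQHPath Ω (lineMap z w) z w where
  exists_lipschitzWith := ⟨_, lipschitzWith_lineMap z w⟩
  source := AffineMap.lineMap_apply_zero z w
  target := AffineMap.lineMap_apply_one z w
  mapsTo := h

lemma qhDist_le_qhLength_lineMap_add (hΩ : IsOpen Ω)
    (hzp : MapsTo (lineMap z p) (Icc (0 : ℝ) 1) Ω) (hpw : MapsTo (lineMap p w) (Icc (0 : ℝ) 1) Ω) :
    qhDist Ω z w ≤ qhLength Ω (lineMap z p) 0 1 + qhLength Ω (lineMap p w) 0 1 := by
  have h₁ := isQHPath_lineMap hzp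
  have h₂ := isQHPath_lineMap hpw
  exact qhLength_concat hΩ h₁ h₂ ▸ qhDist_le_qhLength (h₁.concat h₂)

lemma integral_abs_sub_mul_comp_lineMap (f : ℝ → ℝ) (hf : ∀ s ∈ uIcc a b, 0 ≤ f s) :
    ∫ t in (0 : ℝ)..1, |b - a| * f (lineMap a b t) = |∫ s in a..b, f s| := by
  have hnonneg : 0 ≤ ∫ t in (0 : ℝ)..1, f (lineMap a b t) :=
    intervalIntegral.integral_nonneg zero_le_one fun t ht =>
      hf _ (segment_eq_uIcc a b ▸ lineMap_mem_segment ℝ a b ht)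
  rw [intervalIntegral.integral_const_mul, ← abs_of_nonneg hnonneg, ← abs_mul]
  simp only [AffineMap.lineMap_apply_ring', mul_comm _ (b - a)]
  rw [intervalIntegral.mul_integral_comp_mul_add]
  norm_num

lemma qhSpeed_lineMap :
    qhSpeed Ω (lineMap z w) t = dist z w * (infDist (lineMap z w t) (frontier Ω))⁻¹ := by
  rw [qhSpeed, AffineMap.hasDerivAt_lineMap.deriv, ← dist_eq_norm', div_eq_mul_inv]

lemma qhLength_lineMap_le {ρ : ℝ → ℝ} (hdist : dist z w = |b - a|)
    (hρ : ContinuousOn ρ (uIcc a b)) (hpos : ∀ s ∈ uIcc a b, 0 < ρ s)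
    (hle : ∀ t ∈ Icc (0 : ℝ) 1, ρ (lineMap a b t) ≤ infDist (lineMap z w t) (frontier Ω)) :
    qhLength Ω (lineMap z w) 0 1 ≤ |∫ s in a..b, (ρ s)⁻¹| := by
  have hmaps : MapsTo (lineMap a b) (uIcc (0 : ℝ) 1) (uIcc a b) := fun t ht =>
    segment_eq_uIcc a b ▸ lineMap_mem_segment ℝ a b (uIcc_of_le (zero_le_one' ℝ) ▸ ht)
  rw [← uIcc_of_le zero_le_one] at hle
  have hspeed : ContinuousOn (qhSpeed Ω (lineMap z w)) (uIcc (0 : ℝ) 1) := by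
    simp only [funext fun t => qhSpeed_lineMap (Ω := Ω) (z := z) (w := w) (t := t)]
    exact continuousOn_const.mul
      (((continuous_infDist_pt _).comp AffineMap.lineMap_continuous).continuousOn.inv₀
        fun t ht => ((hpos _ (hmaps ht)).trans_le (hle t ht)).ne')
  have hbound : ContinuousOn (fun t => |b - a| * (ρ (lineMap a b t))⁻¹) (uIcc (0 : ℝ) 1) :=
    continuousOn_const.mul (ContinuousOn.inv₀
      (hρ.comp AffineMap.lineMap_continuous.continuousOn hmaps)
      fun t ht => (hpos _ (hmaps ht)).ne')
  calc qhLength Ω (lineMap z w) 0 1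
      ≤ ∫ t in (0 : ℝ)..1, |b - a| * (ρ (lineMap a b t))⁻¹ := by
        refine intervalIntegral.integral_mono_on zero_le_one hspeed.intervalIntegrable
          hbound.intervalIntegrable fun t ht => ?_
        rw [← uIcc_of_le zero_le_one] at ht
        rw [qhSpeed_lineMap, hdist]
        exact mul_le_mul_of_nonneg_left (inv_anti₀ (hpos _ (hmaps ht)) (hle t ht)) (abs_nonneg _)
    _ = |∫ s in a..b, (ρ s)⁻¹| :=
        integral_abs_sub_mul_comp_lineMap _ fun s hs => (inv_pos.2 (hpos s hs)).le

end QuasihyperbolicLength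

section CuspDomain

variable {n : ℕ} [NeZero n] {α : ℝ} {z w : EuclideanSpace ℝ (Fin n)} {a b t : ℝ}

local notation "axis" => EuclideanSpace.single (0 : Fin n)

lemma dist_axis (z : EuclideanSpace ℝ (Fin n)) (a : ℝ) :
    dist z (axis a) = √((z 0 - a) ^ 2 + radial z ^ 2) := by
  have hoff : ∀ i ∈ Finset.univ.erase (0 : Fin n), dist (z i) (axis a i) ^ 2 = z i ^ 2 :=
    fun i hi => by simp [(Finset.mem_erase.1 hi).1]
  rw [EuclideanSpace.dist_eq, ← Finset.add_sum_erase _ _ (Finset.mem_univ 0),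
    Finset.sum_congr rfl hoff, radial, Real.sq_sqrt (by positivity)]
  simp [Real.dist_eq]

lemma radial_nonneg : 0 ≤ radial z := Real.sqrt_nonneg _

lemma radial_eq_dist (z : EuclideanSpace ℝ (Fin n)) : radial z = dist z (axis (z 0)) := by
  rw [dist_axis, sub_self, zero_pow two_ne_zero, zero_add, Real.sqrt_sq radial_nonneg]

lemma radial_axis (a : ℝ) : radial (axis a) = 0 := by
  simp [radial_eq_dist]

lemma radial_le_dist_axis (z : EuclideanSpace ℝ (Fin n)) (a : ℝ) :
    radial z ≤ dist z (axis a) := by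
  rw [dist_axis]
  exact Real.le_sqrt_of_sq_le (by linarith [sq_nonneg (z 0 - a)])

lemma radial_le_dist_add_radial (z w : EuclideanSpace ℝ (Fin n)) :
    radial w ≤ dist w z + radial z :=
  calc radial w ≤ dist w (axis (z 0)) := radial_le_dist_axis w (z 0)
    _ ≤ dist w z + dist z (axis (z 0)) := dist_triangle _ _ _
    _ = dist w z + radial z := by rw [radial_eq_dist z]

lemma lineMap_axis_apply_zero (z : EuclideanSpace ℝ (Fin n)) (t : ℝ) :
    (lineMap z (axis (z 0)) t : EuclideanSpace ℝ (Fin n)) 0 = z 0 := by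
  simp [AffineMap.lineMap_apply]

lemma radial_lineMap_axis (z : EuclideanSpace ℝ (Fin n)) (ht : t ≤ 1) :
    radial (lineMap z (axis (z 0)) t) = (1 - t) * radial z := by
  rw [radial_eq_dist, lineMap_axis_apply_zero, dist_lineMap_right,
    Real.norm_of_nonneg (sub_nonneg.2 ht), radial_eq_dist z]

lemma lineMap_axis_axis (a b t : ℝ) :
    (lineMap (axis a) (axis b) t : EuclideanSpace ℝ (Fin n)) = axis (lineMap a b t) := by
  ext i
  by_cases hi : i = 0 <;> simp [AffineMap.lineMap_apply, hi]

lemma axis_mem_cuspDomain (ha : 0 < a) (ha' : a < 1) : axis a ∈ cuspDomain n α := by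
  simp [cuspDomain, radial_axis, ha, ha', Real.rpow_pos_of_pos ha α]

lemma isOpen_cuspDomain (hα : 0 ≤ α) : IsOpen (cuspDomain n α) := by
  have hcoord : Continuous fun z : EuclideanSpace ℝ (Fin n) => z 0 := by fun_prop
  have hradial : Continuous fun z : EuclideanSpace ℝ (Fin n) => radial z := by
    unfold radial; fun_prop
  exact (isOpen_lt continuous_const hcoord).inter ((isOpen_lt hcoord continuous_const).inter
    (isOpen_lt hradial (hcoord.rpow_const fun _ => Or.inr hα)))

lemma nonempty_frontier_cuspDomain : (frontier (cuspDomain n α)).Nonempty := by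
  refine nonempty_frontier_iff.2 ⟨⟨axis (1 / 2), axis_mem_cuspDomain ?_ ?_⟩, fun huniv => ?_⟩
  · norm_num
  · norm_num
  · have hmem : (0 : EuclideanSpace ℝ (Fin n)) ∈ cuspDomain n α := huniv ▸ mem_univ _
    exact lt_irrefl _ hmem.1

lemma rpow_sub_rpow_le_mul_abs_sub {x y : ℝ} (hα : 1 ≤ α) (hx : 0 < x) (hx' : x ≤ 1)
    (hy : 0 ≤ y) : x ^ α - y ^ α ≤ α * |x - y| := by
  have hbernoulli : 1 + α * (y / x - 1) ≤ (y / x) ^ α := by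
    simpa only [add_sub_cancel] using one_add_mul_self_le_rpow_one_add
      (show -1 ≤ y / x - 1 by linarith [div_nonneg hy hx.le]) hα
  have hpow : x ^ α ≤ x := Real.rpow_le_self_of_le_one hx.le hx' hα
  rw [Real.div_rpow hy hx.le, le_div_iff₀ (Real.rpow_pos_of_pos hx α)] at hbernoulli
  calc x ^ α - y ^ α ≤ α * ((x - y) * (x ^ α / x)) := by
        field_simp at hbernoulli ⊢
        linarith
    _ ≤ α * |x - y| := by
        have hle_abs : (x - y) * (x ^ α / x) ≤ |x - y| * 1 :=
          mul_le_mul (le_abs_self _) ((div_le_one hx).2 hpow) (by positivity) (abs_nonneg _)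
        rw [mul_one] at hle_abs
        gcongr

lemma ball_subset_cuspDomain (hα : 1 ≤ α) (hz : 0 < z 0) (hz' : z 0 ≤ 1 / 2) :
    ball z ((z 0 ^ α - radial z) / (1 + α)) ⊆ cuspDomain n α := by
  intro w hw
  rw [mem_ball, lt_div_iff₀ (by linarith)] at hw
  have hcoord : |z 0 - w 0| ≤ dist w z := by
    rw [abs_sub_comm, dist_eq_norm]
    simpa using PiLp.norm_apply_le (w - z) 0
  have hpow : z 0 ^ α ≤ z 0 := Real.rpow_le_self_of_le_one hz.le (by linarith) hα
  have hdist : dist w z < z 0 / 2 := by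
    nlinarith [radial_nonneg (z := z), dist_nonneg (x := w) (y := z)]
  have hw0 : 0 < w 0 := by linarith [le_abs_self (z 0 - w 0)]
  refine ⟨hw0, by linarith [neg_abs_le (z 0 - w 0)], ?_⟩
  have hrpow : z 0 ^ α - w 0 ^ α ≤ α * dist w z :=
    (rpow_sub_rpow_le_mul_abs_sub hα hz (by linarith) hw0.le).trans (by gcongr)
  linarith [radial_le_dist_add_radial z w]

lemma le_infDist_frontier_cuspDomain (hα : 1 ≤ α) (hz : 0 < z 0) (hz' : z 0 ≤ 1 / 2) :
    (z 0 ^ α - radial z) / (1 + α) ≤ infDist z (frontier (cuspDomain n α)) := by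
  refine (le_infDist nonempty_frontier_cuspDomain).2 fun w hw => ?_
  by_contra! hlt
  exact hw.2 (interior_maximal (ball_subset_cuspDomain hα hz hz') isOpen_ball (mem_ball'.2 hlt))

lemma mapsTo_lineMap_axis_cuspDomain (hz : z ∈ cuspDomain n α) :
    MapsTo (lineMap z (axis (z 0))) (Icc (0 : ℝ) 1) (cuspDomain n α) := fun t ht => by
  rw [cuspDomain, mem_ofPred_eq, lineMap_axis_apply_zero, radial_lineMap_axis z ht.2]
  exact ⟨hz.1, hz.2.1,
    (mul_le_of_le_one_left radial_nonneg (by linarith [ht.1])).trans_lt hz.2.2⟩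

lemma mapsTo_lineMap_axis_axis_cuspDomain (ha : a ∈ Ioo (0 : ℝ) 1) (hb : b ∈ Ioo (0 : ℝ) 1) :
    MapsTo (lineMap (axis a) (axis b)) (Icc (0 : ℝ) 1) (cuspDomain n α) := fun t ht => by
  have hmem := (convex_Ioo (0 : ℝ) 1).lineMap_mem ha hb ht
  rw [lineMap_axis_axis]
  exact axis_mem_cuspDomain hmem.1 hmem.2

lemma qhLength_lineMap_axis_le (hα : 1 ≤ α) (hz : z ∈ cuspDomain n α) (hz' : z 0 ≤ 1 / 2) :
    qhLength (cuspDomain n α) (lineMap z (axis (z 0))) 0 1 ≤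
      (1 + α) * Real.log (z 0 ^ α / (z 0 ^ α - radial z)) := by
  have hgap : 0 < z 0 ^ α - radial z := sub_pos.2 hz.2.2
  have hgap' : z 0 ^ α - radial z ≤ z 0 ^ α := sub_le_self _ radial_nonneg
  have hpos : ∀ s ∈ uIcc (z 0 ^ α - radial z) (z 0 ^ α), 0 < s / (1 + α) := fun s hs => by
    rw [uIcc_of_le hgap'] at hs
    exact div_pos (hgap.trans_le hs.1) (by linarith)
  calc qhLength (cuspDomain n α) (lineMap z (axis (z 0))) 0 1
      ≤ |∫ s in (z 0 ^ α - radial z)..z 0 ^ α, (s / (1 + α))⁻¹| := by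
        refine qhLength_lineMap_le ?_ (by fun_prop) hpos fun t ht => ?_
        · rw [← radial_eq_dist, sub_sub_cancel, abs_of_nonneg radial_nonneg]
        · convert le_infDist_frontier_cuspDomain (z := lineMap z (axis (z 0)) t) hα ?_ ?_ using 2
          · rw [lineMap_axis_apply_zero, radial_lineMap_axis z ht.2, AffineMap.lineMap_apply_ring']
            ring
          · simpa only [lineMap_axis_apply_zero] using hz.1
          · simpa only [lineMap_axis_apply_zero] using hz'
    _ = (1 + α) * Real.log (z 0 ^ α / (z 0 ^ α - radial z)) := by
        simp only [inv_div, div_eq_mul_inv (1 + α)]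
        rw [intervalIntegral.integral_const_mul, integral_inv_of_pos hgap (hgap.trans_le hgap'),
          abs_of_nonneg]
        exact mul_nonneg (by linarith) (Real.log_nonneg ((one_le_div hgap).2 hgap'))

lemma qhLength_lineMap_axis_axis_le (hα : 1 < α) (ha : a ∈ Ioc (0 : ℝ) (1 / 2))
    (hb : b ∈ Ioc (0 : ℝ) (1 / 2)) :
    qhLength (cuspDomain n α) (lineMap (axis a) (axis b)) 0 1 ≤
      (1 + α) / (α - 1) * |a ^ (1 - α) - b ^ (1 - α)| := by
  have hmem : ∀ s ∈ uIcc a b, s ∈ Ioc (0 : ℝ) (1 / 2) := fun s hs =>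
    ordConnected_Ioc.uIcc_subset ha hb hs
  have hpos : ∀ s ∈ uIcc a b, 0 < s ^ α / (1 + α) := fun s hs =>
    div_pos (Real.rpow_pos_of_pos (hmem s hs).1 α) (by linarith)
  calc qhLength (cuspDomain n α) (lineMap (axis a) (axis b)) 0 1
      ≤ |∫ s in a..b, (s ^ α / (1 + α))⁻¹| := by
        refine qhLength_lineMap_le ?_ ?_ hpos fun t ht => ?_
        · rw [PiLp.dist_single_same, Real.dist_eq, abs_sub_comm]
        · exact (continuousOn_id.rpow_const fun s _ => Or.inr (by linarith)).div_const _
        · have hst := (convex_Ioc (0 : ℝ) (1 / 2)).lineMap_mem ha hb ht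
          rw [lineMap_axis_axis]
          simpa [radial_axis] using le_infDist_frontier_cuspDomain (n := n)
            (z := axis (lineMap a b t)) hα.le (by simpa using hst.1) (by simpa using hst.2)
    _ = |(1 + α) * ∫ s in a..b, s ^ (-α)| := by
        rw [← intervalIntegral.integral_const_mul]
        congr 1
        refine intervalIntegral.integral_congr fun s hs => ?_
        simp only [Real.rpow_neg (hmem s hs).1.le, inv_div, div_eq_mul_inv (1 + α)]
    _ = (1 + α) / (α - 1) * |a ^ (1 - α) - b ^ (1 - α)| := by
        rw [integral_rpow (Or.inr ⟨by linarith, fun h => lt_irrefl _ (hmem 0 h).1⟩), abs_mul,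
          abs_div, neg_add_eq_sub, abs_sub_comm (b ^ _), abs_sub_comm 1 α,
          abs_of_pos (sub_pos.2 hα), abs_of_pos (by linarith : 0 < 1 + α)]
        ring

lemma qhDist_cuspDomain_axis_le (hα : 1 < α) (hz : z ∈ cuspDomain n α) (hz' : z 0 ≤ 1 / 2)
    (hb : b ∈ Ioc (0 : ℝ) (1 / 2)) :
    qhDist (cuspDomain n α) z (axis b) ≤
      (1 + α) * Real.log (z 0 ^ α / (z 0 ^ α - radial z)) +
        (1 + α) / (α - 1) * |z 0 ^ (1 - α) - b ^ (1 - α)| :=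
  (qhDist_le_qhLength_lineMap_add (isOpen_cuspDomain (by linarith))
    (mapsTo_lineMap_axis_cuspDomain hz)
    (mapsTo_lineMap_axis_axis_cuspDomain ⟨hz.1, hz.2.1⟩ ⟨hb.1, by linarith [hb.2]⟩)).trans
  (add_le_add (qhLength_lineMap_axis_le hα.le hz hz')
    (qhLength_lineMap_axis_axis_le hα ⟨hz.1, hz'⟩ hb))

end CuspDomain

section CuspCell

variable {n : ℕ} [NeZero n] {α : ℝ} {j m : ℕ} {z : EuclideanSpace ℝ (Fin n)}

lemma inv_two_pow_le_of_mem_cuspCell (hm : 1 ≤ m) (hz : z ∈ cuspCell n α j m) :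
    ((2 : ℝ) ^ (j + 1))⁻¹ ≤ z 0 := by
  have hlog : (2 : ℝ) ^ Nat.log 2 m ≤ m :=
    mod_cast Nat.pow_log_le_self 2 (Nat.one_le_iff_ne_zero.1 hm)
  calc ((2 : ℝ) ^ (j + 1))⁻¹ = 2 ^ Nat.log 2 m / 2 ^ (j + (Nat.log 2 m + 1)) := by
        field_simp
        ring
    _ ≤ m / 2 ^ (j + (Nat.log 2 m + 1)) := by gcongr
    _ ≤ z 0 := hz.1

lemma pos_of_mem_cuspCell (hm : 1 ≤ m) (hz : z ∈ cuspCell n α j m) : 0 < z 0 :=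
  (by positivity : (0 : ℝ) < (2 ^ (j + 1))⁻¹).trans_le (inv_two_pow_le_of_mem_cuspCell hm hz)

lemma le_inv_two_pow_of_mem_cuspCell (hz : z ∈ cuspCell n α j m) : z 0 ≤ ((2 : ℝ) ^ j)⁻¹ := by
  have hlog : (m + 1 : ℝ) ≤ 2 ^ (Nat.log 2 m + 1) :=
    mod_cast Nat.lt_pow_succ_log_self one_lt_two m
  calc z 0 ≤ (m + 1 : ℝ) / 2 ^ (j + (Nat.log 2 m + 1)) := hz.2.1
    _ ≤ 2 ^ (Nat.log 2 m + 1) / 2 ^ (j + (Nat.log 2 m + 1)) := by gcongr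
    _ = ((2 : ℝ) ^ j)⁻¹ := by
        field_simp
        ring

lemma le_half_of_mem_cuspCell (hj : 1 ≤ j) (hz : z ∈ cuspCell n α j m) : z 0 ≤ 1 / 2 :=
  calc z 0 ≤ ((2 : ℝ) ^ j)⁻¹ := le_inv_two_pow_of_mem_cuspCell hz
    _ ≤ ((2 : ℝ) ^ 1)⁻¹ := by gcongr; exact one_le_two
    _ = 1 / 2 := by norm_num

lemma rpow_div_two_pow_le_sub_radial (hz : z ∈ cuspCell n α j m) :
    z 0 ^ α / 2 ^ (Nat.log 2 m + 1) ≤ z 0 ^ α - radial z := by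
  have hradial := hz.2.2.2
  rw [sub_mul, one_mul, one_div_mul_eq_div] at hradial
  linarith

lemma sub_radial_pos_of_mem_cuspCell (hm : 1 ≤ m) (hz : z ∈ cuspCell n α j m) :
    0 < z 0 ^ α - radial z := by
  have hpos := pos_of_mem_cuspCell hm hz
  exact (by positivity : 0 < z 0 ^ α / 2 ^ (Nat.log 2 m + 1)).trans_le
    (rpow_div_two_pow_le_sub_radial hz)

lemma mem_cuspDomain_of_mem_cuspCell (hj : 1 ≤ j) (hm : 1 ≤ m) (hz : z ∈ cuspCell n α j m) :
    z ∈ cuspDomain n α :=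
  ⟨pos_of_mem_cuspCell hm hz, by linarith [le_half_of_mem_cuspCell hj hz],
    sub_pos.1 (sub_radial_pos_of_mem_cuspCell hm hz)⟩

lemma log_rpow_div_sub_radial_le (hm : 1 ≤ m) (hz : z ∈ cuspCell n α j m) :
    Real.log (z 0 ^ α / (z 0 ^ α - radial z)) ≤ (Nat.log 2 m + 1 : ℕ) := by
  have hgap := sub_radial_pos_of_mem_cuspCell hm hz
  have hratio : z 0 ^ α / (z 0 ^ α - radial z) ≤ 2 ^ (Nat.log 2 m + 1) :=
    (div_le_comm₀ (by positivity) hgap).1 (rpow_div_two_pow_le_sub_radial hz)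
  calc Real.log (z 0 ^ α / (z 0 ^ α - radial z))
      ≤ Real.log (2 ^ (Nat.log 2 m + 1)) :=
        Real.log_le_log (div_pos (Real.rpow_pos_of_pos (pos_of_mem_cuspCell hm hz) α) hgap) hratio
    _ = (Nat.log 2 m + 1 : ℕ) * Real.log 2 := Real.log_pow _ _
    _ ≤ (Nat.log 2 m + 1 : ℕ) :=
        mul_le_of_le_one_right (Nat.cast_nonneg _) (by linarith [Real.log_two_lt_d9])

lemma abs_rpow_sub_rpow_le {a b c s : ℝ} (hc : 0 < c) (ha : c ≤ a) (hb : c ≤ b) (hs : s ≤ 0) :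
    |a ^ s - b ^ s| ≤ c ^ s := by
  have hac := Real.rpow_le_rpow_of_nonpos hc ha hs
  have hbc := Real.rpow_le_rpow_of_nonpos hc hb hs
  have ha0 := Real.rpow_nonneg (hc.le.trans ha) s
  have hb0 := Real.rpow_nonneg (hc.le.trans hb) s
  exact abs_sub_le_iff.2 ⟨by linarith, by linarith⟩

lemma abs_rpow_sub_rpow_third_le (hα : 1 ≤ α) (hj : 1 ≤ j) (hm : 1 ≤ m)
    (hz : z ∈ cuspCell n α j m) :
    |z 0 ^ (1 - α) - (1 / 3) ^ (1 - α)| ≤ 2 ^ (α - 1) * 2 ^ ((α - 1) * j) := by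
  have hthird : ((2 : ℝ) ^ (j + 1))⁻¹ ≤ 1 / 3 :=
    calc ((2 : ℝ) ^ (j + 1))⁻¹ ≤ (2 ^ (1 + 1))⁻¹ := by gcongr; exact one_le_two
      _ ≤ 1 / 3 := by norm_num
  calc |z 0 ^ (1 - α) - (1 / 3) ^ (1 - α)| ≤ ((2 : ℝ) ^ (j + 1))⁻¹ ^ (1 - α) :=
        abs_rpow_sub_rpow_le (by positivity) (inv_two_pow_le_of_mem_cuspCell hm hz) hthird
          (by linarith)
    _ = 2 ^ ((α - 1) * ((j + 1 : ℕ) : ℝ)) := by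
        rw [Real.inv_rpow (by positivity), ← Real.rpow_neg (by positivity), neg_sub, mul_comm,
          Real.rpow_natCast_mul zero_le_two]
    _ = 2 ^ (α - 1) * 2 ^ ((α - 1) * j) := by
        rw [← Real.rpow_add two_pos]
        push_cast
        ring_nf

lemma qhDist_le_of_mem_cuspCell (hα : 1 < α) (hj : 1 ≤ j) (hm : 1 ≤ m)
    (hz : z ∈ cuspCell n α j m) :
    qhDist (cuspDomain n α) z (EuclideanSpace.single (0 : Fin n) (1 / 3 : ℝ)) ≤
      (1 + α) * (Nat.log 2 m + 1 : ℕ) +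
        (1 + α) / (α - 1) * (2 ^ (α - 1) * 2 ^ ((α - 1) * j)) := by
  have : 0 < α - 1 := sub_pos.2 hα
  refine (qhDist_cuspDomain_axis_le hα (mem_cuspDomain_of_mem_cuspCell hj hm hz)
    (le_half_of_mem_cuspCell hj hz) (by norm_num)).trans ?_
  gcongr
  · exact log_rpow_div_sub_radial_le hm hz
  · exact abs_rpow_sub_rpow_third_le hα.le hj hm hz

end CuspCell

/-- With base point `z₀ = (1/3, 0, …, 0)`, every `z ∈ S_{j,m}`
satisfies `k(z, z₀; Ω_α) ≤ C(α)·(1 + ℓ)·2^{(α−1)j}`, where `ℓ = ⌊log₂ m⌋ + 1`. -/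
theorem cuspCell_qh_upper_bound (n : ℕ) [NeZero n] (hn : 2 ≤ n) (α : ℝ) (hα : 1 < α) :
    ∃ C : ℝ, 0 < C ∧ ∀ j m : ℕ, 1 ≤ j → 1 ≤ m →
      ∀ z ∈ cuspCell n α j m,
        qhDist (cuspDomain n α) z (EuclideanSpace.single (0 : Fin n) (1/3 : ℝ)) ≤
          C * (1 + (Nat.log 2 m + 1 : ℕ)) * (2 : ℝ) ^ ((α - 1) * j) := by
  have : 0 < α - 1 := sub_pos.2 hα
  refine ⟨(1 + α) * (1 + 2 ^ (α - 1) / (α - 1)), by positivity, fun j m hj hm z hz => ?_⟩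
  set ℓ : ℝ := ((Nat.log 2 m + 1 : ℕ) : ℝ)
  set B : ℝ := 2 ^ ((α - 1) * j)
  have hℓ : 0 ≤ ℓ := Nat.cast_nonneg _
  have hB : 1 ≤ B := Real.one_le_rpow one_le_two (by positivity)
  have hℓB : ℓ ≤ (1 + ℓ) * B := by nlinarith
  have hBℓ : B ≤ (1 + ℓ) * B := by nlinarith
  calc _ ≤ (1 + α) * ℓ + (1 + α) / (α - 1) * (2 ^ (α - 1) * B) :=
        qhDist_le_of_mem_cuspCell hα hj hm hz
    _ ≤ (1 + α) * ((1 + ℓ) * B) + (1 + α) / (α - 1) * (2 ^ (α - 1) * ((1 + ℓ) * B)) := by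
        gcongr
    _ = (1 + α) * (1 + 2 ^ (α - 1) / (α - 1)) * (1 + ℓ) * B := by ring
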